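/- The only partition λ such that both λ and λ' are 2-singular, λ is unbroken, and λ is a 4-core, is λ = (2,2). -/

import Mathlib

/-- A partition: weakly decreasing sequence of non-negative integers (indexed from 1,
with the convention `μ 0 = 0`), with finitely many nonzero terms. -/
def IsPartition (μ : ℕ → ℕ) : Prop :=
  μ 0 = 0 ∧ (∀ i, 1 ≤ i → μ (i + 1) ≤ μ i) ∧ ∃ N, ∀ i, N ≤ i → μ i = 0

/-- The conjugate partition: `conj μ j = |{i ≥ 1 : μ i ≥ j}|`. -/
noncomputable def conj (μ : ℕ → ℕ) (j : ℕ) : ℕ :=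
  Nat.card {i : ℕ // 1 ≤ i ∧ j ≤ μ i}

/-- `(i,j)` is a node of the Young diagram of `μ`. -/
def IsNode (μ : ℕ → ℕ) (i j : ℕ) : Prop := 1 ≤ i ∧ 1 ≤ j ∧ j ≤ μ i

/-- The hook length `h_μ(i,j) = 1 + μ_i - j + μ'_j - i` (as an integer). -/
noncomputable def hook (μ : ℕ → ℕ) (i j : ℕ) : ℤ :=
  1 + (μ i : ℤ) - (j : ℤ) + (conj μ j : ℤ) - (i : ℤ)

/-- `μ` is broken: there exist `1 < c < d` with `μ_{c-1} - μ_c > 1` and `μ_{d-1} = μ_d > 0`. -/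
def Broken (μ : ℕ → ℕ) : Prop :=
  ∃ c d : ℕ, 1 < c ∧ c < d ∧ μ c + 1 < μ (c - 1) ∧ μ (d - 1) = μ d ∧ 0 < μ d

/-- `μ` is 2-singular: some `μ_i = μ_{i+1} > 0` (with `i ≥ 1`). -/
def TwoSingular (μ : ℕ → ℕ) : Prop := ∃ i : ℕ, 1 ≤ i ∧ μ i = μ (i + 1) ∧ 0 < μ i

/-- `μ` is an `e`-core: no hook length is divisible by `e`. -/
def IsECore (e : ℕ) (μ : ℕ → ℕ) : Prop :=
  ∀ i j : ℕ, IsNode μ i j → ¬ (e : ℤ) ∣ hook μ i j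

/-- `μ` is an `e`-JM partition. -/
def IsJM (e : ℕ) (μ : ℕ → ℕ) : Prop :=
  ∀ i j : ℕ, IsNode μ i j → (e : ℤ) ∣ hook μ i j →
    (∀ k, 1 ≤ k → k ≤ μ i → (e : ℤ) ∣ hook μ i k) ∨
    (∀ k, 1 ≤ k → k ≤ conj μ j → (e : ℤ) ∣ hook μ k j)

theorem IsPartition.antitone {μ : ℕ → ℕ} (hμ : IsPartition μ) {i j : ℕ} (hi : 1 ≤ i)
    (hij : i ≤ j) : μ j ≤ μ i := by
  induction j, hij using Nat.le_induction with
  | base => exact le_rfl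
  | succ j hj ih => exact (hμ.2.1 j (hi.trans hj)).trans ih

/-- The column of index `j ≥ 1` consists of the rows `1, …, conj μ j`. -/
theorem IsPartition.le_iff_le_conj {μ : ℕ → ℕ} (hμ : IsPartition μ) {i j : ℕ} (hi : 1 ≤ i)
    (hj : 1 ≤ j) : j ≤ μ i ↔ i ≤ conj μ j := by
  classical
  have hex : ∃ k, μ (k + 1) < j := by
    obtain ⟨N, hN⟩ := hμ.2.2
    exact ⟨N, by rw [hN (N + 1) (by omega)]; omega⟩
  obtain ⟨k, hk, hmin⟩ : ∃ k, μ (k + 1) < j ∧ ∀ m, m < k → ¬ μ (m + 1) < j :=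
    ⟨Nat.find hex, Nat.find_spec hex, fun m hm => Nat.find_min hex hm⟩
  have hiff : ∀ i, 1 ≤ i → (j ≤ μ i ↔ i ≤ k) := by
    intro i hi
    constructor
    · intro h
      by_contra hik
      have := hμ.antitone (i := k + 1) (j := i) (by omega) (by omega)
      omega
    · intro h
      have := hmin (i - 1) (by omega)
      rw [Nat.sub_add_cancel hi] at this
      omega
  have hset : conj μ j = k := by
    unfold conj
    have : ∀ i, (1 ≤ i ∧ j ≤ μ i) ↔ i ∈ Finset.Icc 1 k := by
      intro i
      rw [Finset.mem_Icc]
      exact and_congr_right (hiff i)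
    rw [Nat.card_congr (Equiv.subtypeEquivRight this), Nat.card_eq_fintype_card,
      Fintype.card_coe, Nat.card_Icc]
    omega
  rw [hset, hiff i hi]

/-- `x` belongs to the (infinite) beta-set `{μ i - i : i ≥ 1}` of `μ`. -/
def IsBead (μ : ℕ → ℕ) (x : ℤ) : Prop := ∃ i : ℕ, 1 ≤ i ∧ (μ i : ℤ) - i = x

/-- The beta-set of an `e`-core is stable under moving beads down by `e`. -/
theorem IsECore.isBead_sub {e : ℕ} (he : 1 ≤ e) {μ : ℕ → ℕ} (hμ : IsPartition μ)
    (h : IsECore e μ) {x : ℤ} (hx : IsBead μ x) : IsBead μ (x - e) := by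
  classical
  obtain ⟨i, hi, rfl⟩ := hx
  by_contra hgap
  have hex : ∃ m, i ≤ m ∧ (μ (m + 1) : ℤ) ≤ (μ i : ℤ) - i - e + (m + 1) := by
    obtain ⟨N, hN⟩ := hμ.2.2
    refine ⟨N + i + e, by omega, ?_⟩
    rw [hN _ (by omega)]
    push_cast
    omega
  obtain ⟨m, ⟨him, hm⟩, hmin⟩ : ∃ m, (i ≤ m ∧ (μ (m + 1) : ℤ) ≤ (μ i : ℤ) - i - e + (m + 1)) ∧
      ∀ n, n < m → ¬ (i ≤ n ∧ (μ (n + 1) : ℤ) ≤ (μ i : ℤ) - i - e + (n + 1)) :=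
    ⟨Nat.find hex, Nat.find_spec hex, fun n hn => Nat.find_min hex hn⟩
  have hne : (μ (m + 1) : ℤ) ≠ (μ i : ℤ) - i - e + (m + 1) := by
    intro heq
    exact hgap ⟨m + 1, by omega, by push_cast; omega⟩
  obtain ⟨j, hj⟩ : ∃ j : ℕ, (j : ℤ) = (μ i : ℤ) - i - e + (m + 1) :=
    ⟨((μ i : ℤ) - i - e + (m + 1)).toNat, by omega⟩
  have hjm : j ≤ μ m := by
    rcases him.eq_or_lt with rfl | hlt
    · omega
    · have := hmin (m - 1) (by omega)
      rw [Nat.sub_add_cancel (by omega)] at this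
      omega
  have hj1 : 1 ≤ j := by omega
  have hc1 := (hμ.le_iff_le_conj (i := m) (by omega) hj1).1 hjm
  have hc2 := (hμ.le_iff_le_conj (i := m + 1) (by omega) hj1).not.1 (by omega)
  have hmi := hμ.antitone hi him
  refine h i j ⟨hi, hj1, by omega⟩ ?_
  have : hook μ i j = e := by
    unfold hook
    omega
  rw [this]

theorem IsECore.isBead_sub_mul {e : ℕ} (he : 1 ≤ e) {μ : ℕ → ℕ} (hμ : IsPartition μ)
    (h : IsECore e μ) {x : ℤ} (hx : IsBead μ x) (n : ℕ) : IsBead μ (x - e * n) := by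
  induction n with
  | zero => simpa using hx
  | succ n ih =>
    have := h.isBead_sub he hμ ih
    convert this using 1
    push_cast
    ring

theorem IsPartition.lt_of_sub_lt_sub {μ : ℕ → ℕ} (hμ : IsPartition μ) {i j : ℕ}
    (h : (μ j : ℤ) - j < (μ i : ℤ) - i) : i < j ∨ j = 0 := by
  by_contra! hij
  have := hμ.antitone (i := j) (j := i) (by omega) hij.1
  omega

theorem IsPartition.exists_drop {μ : ℕ → ℕ} (hμ : IsPartition μ) (h : TwoSingular (conj μ)) :
    ∃ i, 1 ≤ i ∧ μ (i + 1) + 2 ≤ μ i := by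
  obtain ⟨j, hj, heq, hpos⟩ := h
  refine ⟨conj μ j, hpos, ?_⟩
  have h1 := (hμ.le_iff_le_conj (i := conj μ j) (j := j + 1) hpos (by omega)).2 heq.le
  have h2 := (hμ.le_iff_le_conj (i := conj μ j + 1) (j := j) (by omega) hj).not.2 (by omega)
  omega

theorem IsPartition.eq_two_two {μ : ℕ → ℕ} (hμ : IsPartition μ) (hs : TwoSingular μ)
    (hs' : TwoSingular (conj μ)) (hb : ¬ Broken μ) (hc : IsECore 4 μ) :
    μ 1 = 2 ∧ μ 2 = 2 ∧ ∀ i, 3 ≤ i → μ i = 0 := by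
  have unbroken : ∀ c d, 1 ≤ c → c < d → μ (c + 1) + 2 ≤ μ c → μ d = μ (d + 1) →
      μ (d + 1) = 0 := by
    intro c d hc1 hcd h1 h2
    by_contra h3
    exact hb ⟨c + 1, d + 1, by omega, by omega, by rw [Nat.add_sub_cancel]; omega,
      by simpa using h2, by omega⟩
  have down : ∀ {x : ℤ}, IsBead μ x → ∀ n : ℕ, IsBead μ (x - 4 * n) :=
    fun hx n => hc.isBead_sub_mul (by norm_num) hμ hx n
  have mono : ∀ {i j : ℕ}, 1 ≤ i → i ≤ j → μ j ≤ μ i := hμ.antitone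
  obtain ⟨i, hi, hdrop⟩ := hμ.exists_drop hs'
  obtain ⟨a, ha, haeq, hapos⟩ := hs
  have hai : a + 1 ≤ i := by
    by_contra hlt
    have hne : a ≠ i := by rintro rfl; omega
    have := unbroken i a hi (by omega) hdrop haeq
    omega
  have gap : ∀ t : ℤ, t = 1 ∨ t = 2 → ¬ IsBead μ ((μ i : ℤ) - i - t) := by
    rintro t ht ⟨k, hk, hkx⟩
    rcases Nat.lt_or_ge i k with h | h
    · have := mono (i := i + 1) (j := k) (by omega) h
      omega
    · have := mono hk h
      omega
  have beadA : IsBead μ ((μ a : ℤ) - a) := ⟨a, ha, rfl⟩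
  have beadA' : IsBead μ ((μ a : ℤ) - a - 1) := ⟨a + 1, by omega, by push_cast; omega⟩
  have hle := mono (i := a + 1) (j := i) (by omega) hai
  obtain ⟨n, hn⟩ : ∃ n : ℕ, (μ a : ℤ) - a - 4 * n = (μ i : ℤ) - i + 1 := by
    obtain ⟨q, r, hr0, hr4, hqr⟩ : ∃ q r : ℤ, 0 ≤ r ∧ r < 4 ∧
        (μ a : ℤ) - a - ((μ i : ℤ) - i + 1) = 4 * q + r :=
      ⟨_, _, Int.emod_nonneg _ (by norm_num), Int.emod_lt_of_pos _ (by norm_num),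
        (Int.mul_ediv_add_emod _ 4).symm⟩
    obtain ⟨p, hp⟩ : ∃ p : ℕ, (p : ℤ) = q := ⟨q.toNat, by omega⟩
    have d1 := down beadA (p + 1)
    have d2 := down beadA' (p + 1)
    push_cast at d1 d2
    have hcases : r = 0 ∨ r = 1 ∨ r = 2 ∨ r = 3 := by omega
    rcases hcases with h | h | h | h
    · exact ⟨p, by omega⟩
    · refine absurd ?_ (gap 2 (Or.inr rfl))
      convert d1 using 1
      omega
    · refine absurd ?_ (gap 1 (Or.inl rfl))
      convert d1 using 1
      omega
    · refine absurd ?_ (gap 1 (Or.inl rfl))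
      convert d2 using 1
      omega
  have bead1 : IsBead μ ((μ i : ℤ) - i + 1) := hn ▸ down beadA n
  have bead3 : IsBead μ ((μ i : ℤ) - i - 3) := by
    convert down bead1 1 using 1
    push_cast
    ring
  have bead4 : IsBead μ ((μ i : ℤ) - i - 4) := by
    convert down ⟨i, hi, rfl⟩ 1 using 1
    simp
  have hprev : μ (i - 1) = μ i := by
    obtain ⟨k, hk, hkx⟩ := bead1
    have hki := hμ.lt_of_sub_lt_sub (i := k) (j := i) (by omega)
    have h1 := mono (i := k) (j := i - 1) hk (by omega)
    have h2 := mono (i := i - 1) (j := i) (by omega) (by omega)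
    omega
  have hnext : μ (i + 1) + 2 = μ i := by
    obtain ⟨k, hk, hkx⟩ := bead3
    have hki := hμ.lt_of_sub_lt_sub (i := i) (j := k) (by omega)
    have h1 := mono (i := i + 1) (j := k) (by omega) (by omega)
    omega
  have hnext' : μ (i + 1) = μ (i + 1 + 1) := by
    obtain ⟨k, hk, hkx⟩ := bead4
    have hki := hμ.lt_of_sub_lt_sub (i := i + 1) (j := k) (by push_cast; omega)
    have h1 := mono (i := i + 1 + 1) (j := k) (by omega) (by omega)
    have h2 := mono (i := i + 1) (j := i + 1 + 1) (by omega) (by omega)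
    omega
  have hzero := unbroken i (i + 1) hi (by omega) hdrop hnext'
  have hi2 : i = 2 := by
    by_contra hne
    have hprev' : i - 2 + 1 = i - 1 := by omega
    have hbead : IsBead μ ((μ (i - 2) : ℤ) - (i - 2 : ℕ)) := ⟨i - 2, by omega, rfl⟩
    have hm := mono (i := i - 2) (j := i - 1) (by omega) (by omega)
    have h1 : μ (i - 2) ≠ μ i := by
      intro h
      refine gap 2 (Or.inr rfl) ?_
      convert down hbead 1 using 1
      push_cast
      omega
    have h2 : μ (i - 2) ≠ μ i + 1 := by
      intro h
      refine gap 1 (Or.inl rfl) ?_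
      convert down hbead 1 using 1
      push_cast
      omega
    have := unbroken (i - 2) (i - 1) (by omega) (by omega) (by rw [hprev']; omega)
      (by rw [Nat.sub_add_cancel hi]; exact hprev)
    rw [Nat.sub_add_cancel hi] at this
    omega
  subst hi2
  norm_num at hprev hnext hnext' hzero
  refine ⟨by omega, by omega, fun k hk => ?_⟩
  have := mono (i := 3) (j := k) (by omega) hk
  omega

/-- The only unbroken doubly-singular 4-core is the partition `(2,2)`. -/
theorem four_core_classification (μ : ℕ → ℕ) (hμ : IsPartition μ) :
    (TwoSingular μ ∧ TwoSingular (conj μ) ∧ ¬ Broken μ ∧ IsECore 4 μ) ↔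
      (μ 1 = 2 ∧ μ 2 = 2 ∧ ∀ i, 3 ≤ i → μ i = 0) := by
  refine ⟨fun ⟨hs, hs', hb, hc⟩ => hμ.eq_two_two hs hs' hb hc, ?_⟩
  rintro ⟨h1, h2, h3⟩
  have key : ∀ j, 1 ≤ j → j ≤ 2 → conj μ j = 2 := by
    intro j hj hj2
    have a := (hμ.le_iff_le_conj (i := 2) (by omega) hj).1 (by omega)
    have b := (hμ.le_iff_le_conj (i := 3) (by omega) hj).not.1 (by rw [h3 3 le_rfl]; omega)
    omega
  refine ⟨⟨1, le_rfl, by rw [h1, h2], by omega⟩,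
    ⟨1, le_rfl, by rw [key 1 (by omega) (by omega), key 2 (by omega) (by omega)],
      by rw [key 1 (by omega) (by omega)]; omega⟩, ?_, ?_⟩
  · rintro ⟨c, d, hc, hcd, -, -, hd⟩
    rw [h3 d (by omega)] at hd
    omega
  · rintro i j ⟨hi, hj, hij⟩ hdvd
    have hi2 : i ≤ 2 := by
      by_contra h
      rw [h3 i (by omega)] at hij
      omega
    have hμi : μ i = 2 := by
      interval_cases i
      · exact h1
      · exact h2
    rw [hook, hμi, key j hj (by omega)] at hdvd
    push_cast at hdvd
    omega
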